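/- Let λ_1,…,λ_Q > 0. Then the function p ↦ Σ_{q=1}^Q λ_q·R_q(p) attains its maximum over P_1×…×P_Q, and every global maximizer p* satisfies: (a) p* is a Nash equilibrium of the modified game G̃(λ), i.e., Φ̃_q(p*_q, p*_{-q}) ≥ Φ̃_q(p_q, p*_{-q}) for every q and every p_q ∈ P_q (in particular the solution set of G̃(λ) is nonempty); and (b) p* is Pareto optimal: there is no p ∈ P_1×…×P_Q with R_q(p) ≥ R_q(p*) for all q and R_q(p) > R_q(p*) for some q. (Proposition 4, first part: scalarization maximizers are Pareto-optimal Nash equilibria of the modified game.) -/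

import Mathlib

/-!
The strategy sets are compact (closed, and contained in the box `[0, N]^N`), and on their product
every interference term is at least `1`, so the payoffs are continuous there; hence the weighted
sum `Σ_q λ_q R_q` attains its maximum (`exists_maximizer`).

For a maximizer, (a) follows from the identity `λ_q Φ̃_q = Σ_r λ_r R_r` (`lam_mul_modPayoff`): up to
a positive factor, each player of the modified game maximizes the weighted sum itself, so a global
maximizer admits no profitable unilateral deviation. For (b), a Pareto improvement would strictly
increase the weighted sum, because all weights are positive.
-/

open scoped ENNReal

namespace NCGame

/-- The data of game `G`: `Q` users, `N` carriers, channel gains `chan r q k` (from source `r`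
to destination `q` on carrier `k`), gap parameters `gap q ≥ 1`, and spectral-mask limits
`pmax q k ∈ (0, ∞]`. -/
structure GameData (Q N : ℕ) where
  chan : Fin Q → Fin Q → Fin N → ℂ
  gap : Fin Q → ℝ
  pmax : Fin Q → Fin N → ℝ≥0∞
  chan_diag_ne : ∀ q k, chan q q k ≠ 0
  one_le_gap : ∀ q, 1 ≤ gap q
  pmax_pos : ∀ q k, 0 < pmax q k

namespace GameData

variable {Q N : ℕ}

/-- The strategy set `P_q` of user `q`: powers within the spectral mask whose average
does not exceed the power budget. -/
def stratSet (G : GameData Q N) (q : Fin Q) : Set (Fin N → ℝ) :=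
  { p | (∀ k, 0 ≤ p k ∧ ENNReal.ofReal (p k) ≤ G.pmax q k) ∧
        (1 / (N : ℝ)) * ∑ k, p k ≤ 1 }

/-- Interference-plus-noise `1 + Σ_{r ≠ q} |H_rq(k)|² p_r(k)` seen by user `q` on carrier `k`. -/
noncomputable def interf (G : GameData Q N) (q : Fin Q) (p : Fin Q → Fin N → ℝ)
    (k : Fin N) : ℝ :=
  1 + ∑ r ∈ Finset.univ.erase q, ‖G.chan r q k‖ ^ 2 * p r k

/-- The payoff `R_q(p)` of user `q` at the strategy profile `p`. -/
noncomputable def payoff (G : GameData Q N) (q : Fin Q) (p : Fin Q → Fin N → ℝ) : ℝ :=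
  (1 / (N : ℝ)) * ∑ k, Real.log (1 +
    (1 / G.gap q) * (‖G.chan q q k‖ ^ 2 * p q k) / G.interf q p k)

/-- `p` is a Nash equilibrium of game `G`. -/
def isNE (G : GameData Q N) (p : Fin Q → Fin N → ℝ) : Prop :=
  (∀ q, p q ∈ G.stratSet q) ∧
  ∀ q, ∀ pq ∈ G.stratSet q, G.payoff q (Function.update p q pq) ≤ G.payoff q p

end GameData

end NCGame

namespace NCGame.GameData

/-- Payoff `Φ̃_q` of user `q` in the modified game `G̃(λ)`. -/
noncomputable def modPayoff {Q N : ℕ} (G : NCGame.GameData Q N) (lam : Fin Q → ℝ)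
    (q : Fin Q) (p : Fin Q → Fin N → ℝ) : ℝ :=
  G.payoff q p + (1 / lam q) * ∑ r ∈ Finset.univ.erase q, lam r * G.payoff r p

/-- `p` is a Nash equilibrium of the modified game `G̃(λ)`. -/
def isModNE {Q N : ℕ} (G : NCGame.GameData Q N) (lam : Fin Q → ℝ)
    (p : Fin Q → Fin N → ℝ) : Prop :=
  (∀ q, p q ∈ G.stratSet q) ∧
  ∀ q, ∀ pq ∈ G.stratSet q,
    G.modPayoff lam q (Function.update p q pq) ≤ G.modPayoff lam q p

end NCGame.GameData

namespace NCGame.GameData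

variable {Q N : ℕ}

lemma isClosed_stratSet (G : GameData Q N) (q : Fin Q) : IsClosed (G.stratSet q) := by
  have hset : G.stratSet q =
      (⋂ k, ({p : Fin N → ℝ | 0 ≤ p k} ∩ {p | ENNReal.ofReal (p k) ≤ G.pmax q k})) ∩
        {p | (1 / (N : ℝ)) * ∑ k, p k ≤ 1} := by
    ext p
    simp [stratSet]
  rw [hset]
  refine (isClosed_iInter fun k => ?_).inter (isClosed_le (by fun_prop) continuous_const)
  exact (isClosed_le continuous_const (continuous_apply k)).inter
    (isClosed_le (ENNReal.continuous_ofReal.comp (continuous_apply k)) continuous_const)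

lemma isCompact_stratSet (hN : 1 ≤ N) (G : GameData Q N) (q : Fin Q) :
    IsCompact (G.stratSet q) := by
  refine IsCompact.of_isClosed_subset
    (isCompact_univ_pi fun _ : Fin N => isCompact_Icc (a := (0 : ℝ)) (b := (N : ℝ)))
    (G.isClosed_stratSet q) fun p hp k _ => ⟨(hp.1 k).1, ?_⟩
  have hNpos : (0 : ℝ) < N := by exact_mod_cast hN
  have hsum : ∑ j, p j ≤ N := by
    have h := hp.2
    rwa [one_div, inv_mul_le_iff₀ hNpos, mul_one] at h
  exact (Finset.single_le_sum (fun j _ => (hp.1 j).1) (Finset.mem_univ k)).trans hsum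

lemma zero_mem_stratSet (G : GameData Q N) (q : Fin Q) : (0 : Fin N → ℝ) ∈ G.stratSet q := by
  simp [stratSet]

lemma interf_pos (G : GameData Q N) (q : Fin Q) {p : Fin Q → Fin N → ℝ}
    (hp : ∀ r k, 0 ≤ p r k) (k : Fin N) : 0 < G.interf q p k := by
  have : 0 ≤ ∑ r ∈ Finset.univ.erase q, ‖G.chan r q k‖ ^ 2 * p r k :=
    Finset.sum_nonneg fun r _ => mul_nonneg (sq_nonneg _) (hp r k)
  unfold interf
  linarith

lemma continuousOn_payoff (G : GameData Q N) (q : Fin Q) :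
    ContinuousOn (G.payoff q) {p | ∀ r k, 0 ≤ p r k} := by
  unfold payoff
  refine continuousOn_const.mul (continuousOn_finsetSum _ fun k _ => ContinuousOn.log ?_ ?_)
  · refine continuousOn_const.add (ContinuousOn.div (by fun_prop) ?_
      fun p hp => (G.interf_pos q hp k).ne')
    unfold interf
    fun_prop
  · intro p hp
    have hgap : 0 ≤ 1 / G.gap q := one_div_nonneg.2 (zero_le_one.trans (G.one_le_gap q))
    have hsnr : 0 ≤ (1 / G.gap q) * (‖G.chan q q k‖ ^ 2 * p q k) / G.interf q p k :=
      div_nonneg (mul_nonneg hgap (mul_nonneg (sq_nonneg _) (hp q k))) (G.interf_pos q hp k).le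
    positivity

lemma exists_maximizer (hN : 1 ≤ N) (G : GameData Q N) (lam : Fin Q → ℝ) :
    ∃ p : Fin Q → Fin N → ℝ, (∀ q, p q ∈ G.stratSet q) ∧
      ∀ p' : Fin Q → Fin N → ℝ, (∀ q, p' q ∈ G.stratSet q) →
        ∑ q, lam q * G.payoff q p' ≤ ∑ q, lam q * G.payoff q p := by
  have hcont : ContinuousOn (fun p => ∑ q, lam q * G.payoff q p)
      (Set.univ.pi fun q => G.stratSet q) :=
    continuousOn_finsetSum _ fun q _ => continuousOn_const.mul
      ((G.continuousOn_payoff q).mono fun p hp r k => ((hp r trivial).1 k).1)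
  obtain ⟨p, hp, hmax⟩ := (isCompact_univ_pi fun q => G.isCompact_stratSet hN q).exists_isMaxOn
    ⟨0, fun q _ => G.zero_mem_stratSet q⟩ hcont
  exact ⟨p, fun q => hp q trivial, fun p' hp' => hmax fun q _ => hp' q⟩

/-- Up to the factor `λ_q`, every modified payoff is the same function: the weighted sum. -/
lemma lam_mul_modPayoff (G : GameData Q N) {lam : Fin Q → ℝ} {q : Fin Q} (hq : lam q ≠ 0)
    (p : Fin Q → Fin N → ℝ) :
    lam q * G.modPayoff lam q p = ∑ r, lam r * G.payoff r p := by
  rw [modPayoff, mul_add, ← mul_assoc, mul_one_div_cancel hq, one_mul,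
    Finset.add_sum_erase _ (fun r => lam r * G.payoff r p) (Finset.mem_univ q)]

end NCGame.GameData

/-- **Proposition 4 (first part).** For positive weights `λ`, the weighted sum
`Σ_q λ_q R_q` attains its maximum over the product of strategy sets, and every global
maximizer `p*` is (a) a Nash equilibrium of the modified game `G̃(λ)` (in particular the
solution set of `G̃(λ)` is nonempty), and (b) Pareto optimal. -/
theorem NCGame.scalarization_maximizers (Q N : ℕ) (hQ : 1 ≤ Q) (hN : 1 ≤ N)
    (G : NCGame.GameData Q N) (lam : Fin Q → ℝ) (hlam : ∀ q, 0 < lam q) :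
    (∃ p : Fin Q → Fin N → ℝ, (∀ q, p q ∈ G.stratSet q) ∧
      ∀ p' : Fin Q → Fin N → ℝ, (∀ q, p' q ∈ G.stratSet q) →
        ∑ q, lam q * G.payoff q p' ≤ ∑ q, lam q * G.payoff q p) ∧
    ∀ p : Fin Q → Fin N → ℝ, (∀ q, p q ∈ G.stratSet q) →
      (∀ p' : Fin Q → Fin N → ℝ, (∀ q, p' q ∈ G.stratSet q) →
        ∑ q, lam q * G.payoff q p' ≤ ∑ q, lam q * G.payoff q p) →
      (G.isModNE lam p ∧
        ¬ ∃ p' : Fin Q → Fin N → ℝ, (∀ q, p' q ∈ G.stratSet q) ∧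
            (∀ q, G.payoff q p ≤ G.payoff q p') ∧ ∃ q, G.payoff q p < G.payoff q p') := by
  refine ⟨G.exists_maximizer hN lam, fun p hp hmax => ⟨⟨hp, fun q pq hpq => ?_⟩, ?_⟩⟩
  · refine le_of_mul_le_mul_left ?_ (hlam q)
    rw [G.lam_mul_modPayoff (hlam q).ne', G.lam_mul_modPayoff (hlam q).ne']
    refine hmax _ fun r => ?_
    rcases eq_or_ne r q with rfl | hr
    · simpa using hpq
    · simpa [hr] using hp r
  · rintro ⟨p', hp', hle, q, hlt⟩
    exact (hmax p' hp').not_gt (Finset.sum_lt_sum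
      (fun r _ => mul_le_mul_of_nonneg_left (hle r) (hlam r).le)
      ⟨q, Finset.mem_univ q, mul_lt_mul_of_pos_left hlt (hlam q)⟩)
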